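/- Let X and Y be real Banach spaces and let f : X → Y be a local C¹-diffeomorphism. Suppose that for every y ∈ Y and every ϱ > 0 one has inf{ Sur df(x) : x ∈ X, ‖f(x) − y‖ < ϱ } > 0, where Sur df(x) = inf_{‖v*‖_{Y*}=1} ‖df(x)* v*‖_{X*}. Then for every y ∈ Y the functional F_y(x) = ½‖f(x) − y‖² satisfies the Chang Palais–Smale condition: every sequence {x_n} in X with {F_y(x_n)} bounded and λ_{F_y}(x_n) → 0 has a strongly convergent subsequence. -/

import Mathlib

/-!
Write `F u = ½‖f u - y‖²`. Along a Palais–Smale sequence the values `f (x n)` stay in a ball around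
`y`, on whose preimage the Banach constant of the derivative is at least some `α > 0`. Evaluating a
generalized gradient on the Newton direction `-(df x)⁻¹ (f x - y)` gives `α ‖f x - y‖ ≤ λ_F(x)`
(`le_lambdaF`), so `f (x n) → y`.

It remains to see that `f` is a homeomorphism, which is Hadamard's global inversion theorem. A lower
bound on the Banach constant bounds the inverse derivative, so `f` is locally expanding with a
constant that is uniform over bounded subsets of `Y`, and line segments lift through `f`
(`exists_lift_segment`). Lifting the segment from `f (x 0)` to `y` produces a preimage `z` of `y`, and
lifting the linear contraction of the image of a segment shows that `f` is injective
(`injective_of_lift_segments`). Being an injective local homeomorphism, `f` is an open embedding,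
and `f (x n) → f z` gives `x n → z` for the whole sequence.
-/

open Filter Topology Set

noncomputable section

/-- Clarke generalized directional derivative of `F` at `x` in direction `v`. -/
def clarkeDeriv {X : Type*} [NormedAddCommGroup X] [NormedSpace ℝ X]
    (F : X → ℝ) (x v : X) : ℝ :=
  Filter.limsup (fun p : X × ℝ => (F (x + p.1 + p.2 • v) - F (x + p.1)) / p.2)
    ((nhds (0 : X)) ×ˢ (nhdsWithin (0 : ℝ) (Set.Ioi 0)))

/-- Clarke generalized gradient of `F` at `x`. -/
def clarkeSubdiff {X : Type*} [NormedAddCommGroup X] [NormedSpace ℝ X]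
    (F : X → ℝ) (x : X) : Set (X →L[ℝ] ℝ) :=
  {w | ∀ v, w v ≤ clarkeDeriv F x v}

/-- `λ_F(x) = min_{w* ∈ ∂F(x)} ‖w*‖`. -/
def lambdaF {X : Type*} [NormedAddCommGroup X] [NormedSpace ℝ X]
    (F : X → ℝ) (x : X) : ℝ :=
  sInf ((fun w : X →L[ℝ] ℝ => ‖w‖) '' clarkeSubdiff F x)

/-- The weighted Chang Palais–Smale condition for the weight `h`. -/
def WeightedChangPS {X : Type*} [NormedAddCommGroup X] [NormedSpace ℝ X]
    (F : X → ℝ) (h : ℝ → ℝ) : Prop :=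
  ∀ x : ℕ → X, (∃ C : ℝ, ∀ n, |F (x n)| ≤ C) →
    Filter.Tendsto (fun n => lambdaF F (x n) * (1 + h ‖x n‖)) Filter.atTop (nhds 0) →
    ∃ (z : X) (φ : ℕ → ℕ), StrictMono φ ∧
      Filter.Tendsto (fun n => x (φ n)) Filter.atTop (nhds z)

/-- The Banach constant `Sur A = inf_{‖v*‖=1} ‖A* v*‖`. -/
def surBanach {X Y : Type*} [NormedAddCommGroup X] [NormedSpace ℝ X]
    [NormedAddCommGroup Y] [NormedSpace ℝ Y] (A : X →L[ℝ] Y) : ℝ :=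
  sInf ((fun v : Y →L[ℝ] ℝ => ‖v.comp A‖) '' {v : Y →L[ℝ] ℝ | ‖v‖ = 1})

/-- Norm-coercivity: `‖f x‖ → ∞` as `‖x‖ → ∞`. -/
def NormCoercive {X Y : Type*} [NormedAddCommGroup X] [NormedAddCommGroup Y]
    (f : X → Y) : Prop :=
  Filter.Tendsto (fun x => ‖f x‖) (Filter.comap (fun x : X => ‖x‖) Filter.atTop) Filter.atTop

/-! ### Lifting segments and injectivity -/

/-- For an isomorphism `A`, a lower bound for the Banach constant is a lower bound for `A` itself,
i.e. a bound on `A⁻¹`: test the constant on the normalisation of `φ ∘ A⁻¹`, where `φ` norms `v`. -/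
lemma le_norm_of_le_surBanach {X Y : Type*} [NormedAddCommGroup X] [NormedSpace ℝ X]
    [NormedAddCommGroup Y] [NormedSpace ℝ Y] (A : X ≃L[ℝ] Y) {α : ℝ}
    (hα : α ≤ surBanach (A : X →L[ℝ] Y)) (v : X) : α * ‖v‖ ≤ ‖A v‖ := by
  rcases eq_or_ne v 0 with rfl | hv
  · simp
  obtain ⟨φ, hφ, hφv⟩ := exists_dual_vector ℝ v (norm_ne_zero_iff.mpr hv)
  have hψA : (φ.comp (A.symm : Y →L[ℝ] X)).comp (A : X →L[ℝ] Y) = φ := by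
    ext u; simp
  set ψ : Y →L[ℝ] ℝ := φ.comp (A.symm : Y →L[ℝ] X) with hψ
  have hψ0 : ψ ≠ 0 := by
    intro h
    rw [h, ContinuousLinearMap.zero_comp] at hψA
    rw [← hψA] at hφ
    simp at hφ
  have hψn : 0 < ‖ψ‖ := norm_pos_iff.mpr hψ0
  have h1 : surBanach (A : X →L[ℝ] Y) ≤ ‖ψ‖⁻¹ := by
    refine csInf_le ⟨0, ?_⟩ ⟨‖ψ‖⁻¹ • ψ, ?_, ?_⟩
    · rintro _ ⟨u, -, rfl⟩
      exact norm_nonneg _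
    · simp [norm_smul, hψn.ne']
    · simp only [ContinuousLinearMap.smul_comp, hψA, norm_smul, hφ]
      simp
  have h2 : ‖v‖ ≤ ‖ψ‖ * ‖A v‖ := by
    have h3 : ψ (A v) = ‖v‖ := by simp [hψ, hφv]
    calc ‖v‖ = ψ (A v) := h3.symm
      _ ≤ ‖ψ (A v)‖ := Real.le_norm_self _
      _ ≤ _ := ψ.le_opNorm _
  calc α * ‖v‖ ≤ ‖ψ‖⁻¹ * ‖v‖ := by gcongr; exact hα.trans h1
    _ ≤ ‖ψ‖⁻¹ * (‖ψ‖ * ‖A v‖) := by gcongr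
    _ = ‖A v‖ := by field_simp

/-- A Lipschitz curve lifts through a local homeomorphism from a complete space that is locally
`K`-expanding over the curve. The lifts on `[0, T]` are `K * M`-Lipschitz, hence converge as `T`
increases to a limit, and completeness lets the lift be continued up to time `1`. -/
lemma exists_lift_curve {X Y : Type*} [NormedAddCommGroup X] [CompleteSpace X]
    [NormedAddCommGroup Y] {f : X → Y} (hf : IsLocalHomeomorph f)
    {c : ℝ → Y} {K M : ℝ} (hK : 0 ≤ K) (hM : 0 ≤ M) (hc : ∀ s t, dist (c s) (c t) ≤ M * |s - t|)
    (hU : ∀ a, ∀ s ∈ Icc (0 : ℝ) 1, f a = c s →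
      ∃ U ∈ 𝓝 a, ∀ u ∈ U, ∀ v ∈ U, dist u v ≤ K * dist (f u) (f v))
    {x : X} (hx : f x = c 0) :
    ∃ g : ℝ → X, g 0 = x ∧ ContinuousOn g (Icc 0 1) ∧ ∀ s ∈ Icc (0 : ℝ) 1, f (g s) = c s := by
  set L := K * M with hL
  have hL0 : 0 ≤ L := mul_nonneg hK hM
  have hcc : Continuous c :=
    (LipschitzWith.of_dist_le_mul (K := ⟨M, hM⟩) (fun s t => hc s t)).continuous
  -- `P T g`: on `[0, T]` the curve `g` is an `L`-Lipschitz lift of `c` starting at `x`.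
  let P : ℝ → (ℝ → X) → Prop := fun T g => g 0 = x ∧ (∀ s ∈ Icc (0 : ℝ) T, f (g s) = c s) ∧
    ∀ s ∈ Icc (0 : ℝ) T, ∀ t ∈ Icc (0 : ℝ) T, dist (g s) (g t) ≤ L * |s - t|
  have hPmono : ∀ {T T' g}, T ≤ T' → P T' g → P T g := fun h ⟨h0, h1, h2⟩ =>
    ⟨h0, fun s hs => h1 s ⟨hs.1, hs.2.trans h⟩,
      fun s hs t ht => h2 s ⟨hs.1, hs.2.trans h⟩ t ⟨ht.1, ht.2.trans h⟩⟩
  have hlip : ∀ {g : ℝ → X} {s : Set ℝ}, (∀ a ∈ s, ∀ b ∈ s, dist (g a) (g b) ≤ L * |a - b|) →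
      UniformContinuousOn g s := fun {g s} h =>
    (LipschitzOnWith.of_dist_le_mul (K := ⟨L, hL0⟩) (fun a ha b hb => h a ha b hb)).uniformContinuousOn
  have huniq : ∀ {T g g'}, 0 ≤ T → P T g → P T g' → g T = g' T := by
    intro T g g' hT ⟨h0, h1, h2⟩ ⟨h0', h1', h2'⟩
    refine (T2Space.isSeparatedMap f).eqOn_of_comp_eqOn hf.isLocallyInjective
      (isPreconnected_Icc (a := (0 : ℝ)) (b := T)) (hlip h2).continuousOn
      (hlip h2').continuousOn (fun s hs => ?_) (left_mem_Icc.mpr hT) (h0.trans h0'.symm)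
      (right_mem_Icc.mpr hT)
    simp [h1 s hs, h1' s hs]
  let S : Set ℝ := {T | ∃ g, P T g}
  have h0S : (0 : ℝ) ∈ S := by
    refine ⟨fun _ => x, rfl, fun s hs => ?_, fun s hs t ht => ?_⟩
    · rw [le_antisymm hs.2 hs.1, hx]
    · simpa using by positivity
  -- Lifts on `[0, s]`, `s < T`, are restrictions of one another, so they glue to an `L`-Lipschitz
  -- lift `G` on `[0, T)`, which has a limit at `T`.
  have hclosed : IsClosed (S ∩ Icc 0 1) := by
    refine isClosed_of_closure_subset fun T hT => ?_
    have hT01 : T ∈ Icc (0 : ℝ) 1 := closure_minimal inter_subset_right isClosed_Icc hT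
    refine ⟨?_, hT01⟩
    rcases hT01.1.eq_or_lt with rfl | hT0
    · exact h0S
    have hlt : ∀ s, s < T → s ∈ S := by
      intro s hs
      obtain ⟨s', hs', ⟨g, hg⟩, -⟩ := mem_closure_iff.1 hT (Ioi s) isOpen_Ioi hs
      exact ⟨g, hPmono (le_of_lt hs') hg⟩
    choose! γ hγ using hlt
    let G : ℝ → X := fun s => γ s s
    have hGγ : ∀ s t, 0 ≤ s → s ≤ t → t < T → γ t s = G s := fun s t h0 h1 h2 =>
      huniq (g' := γ s) h0 (hPmono h1 (hγ t h2)) (hγ s (h1.trans_lt h2))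
    have hGlip : ∀ s ∈ Ico 0 T, ∀ t ∈ Ico 0 T, dist (G s) (G t) ≤ L * |s - t| := by
      intro s hs t ht
      have hm : max s t < T := max_lt hs.2 ht.2
      rw [← hGγ s _ hs.1 (le_max_left s t) hm, ← hGγ t _ ht.1 (le_max_right s t) hm]
      exact (hγ _ hm).2.2 s ⟨hs.1, le_max_left _ _⟩ t ⟨ht.1, le_max_right _ _⟩
    have hGf : ∀ s ∈ Ico 0 T, f (G s) = c s := fun s hs => (hγ s hs.2).2.1 s ⟨hs.1, le_rfl⟩
    have hmem : Ico 0 T ∈ 𝓝[<] T := Ico_mem_nhdsLT hT0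
    obtain ⟨z, hz⟩ : ∃ z, Tendsto G (𝓝[<] T) (𝓝 z) :=
      CompleteSpace.complete ((cauchy_nhds.mono nhdsWithin_le_nhds).map_of_le (hlip hGlip)
        (le_principal_iff.mpr hmem))
    have hid : Tendsto (fun s : ℝ => s) (𝓝[<] T) (𝓝 T) := nhdsWithin_le_nhds
    have hfz : f z = c T := by
      refine tendsto_nhds_unique ((hf.continuous.tendsto z).comp hz) ?_
      refine ((hcc.tendsto T).comp hid).congr' ?_
      filter_upwards [hmem] with s hs using (hGf s hs).symm
    have hzl : ∀ s ∈ Ico 0 T, dist (G s) z ≤ L * |s - T| := by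
      intro s hs
      refine le_of_tendsto_of_tendsto (tendsto_const_nhds.dist hz)
        (tendsto_const_nhds.mul (tendsto_const_nhds.sub hid).abs) ?_
      filter_upwards [hmem] with t ht using hGlip s hs t ht
    have hico : ∀ {s}, s ∈ Icc 0 T → s ≠ T → s ∈ Ico 0 T := fun h h' =>
      ⟨h.1, lt_of_le_of_ne h.2 h'⟩
    refine ⟨fun s => if s = T then z else G s, ?_, fun s hs => ?_, fun s hs t ht => ?_⟩
    · simp only [hT0.ne, if_false]
      exact (hγ 0 hT0).1
    · dsimp only
      split_ifs with h
      · rw [h, hfz]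
      · exact hGf s (hico hs h)
    · dsimp only
      split_ifs with h hne hne
      · simpa using by positivity
      · rw [h, dist_comm, abs_sub_comm]
        exact hzl t (hico ht hne)
      · rw [hne]
        exact hzl s (hico hs h)
      · exact hGlip s (hico hs h) t (hico ht hne)
  -- A lift on `[0, T]` is continued past `T` by picking preimages in a neighbourhood `U` of `g T`
  -- on which `f` is expanding; the expansion makes the continuation `L`-Lipschitz.
  have hsub : Icc (0 : ℝ) 1 ⊆ S := by
    refine hclosed.Icc_subset_of_forall_exists_gt h0S ?_
    rintro T ⟨⟨g, h0, h1, h2⟩, hT⟩ y hy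
    have hTT : T ∈ Icc 0 T := ⟨hT.1, le_rfl⟩
    obtain ⟨U, hUa, hUK⟩ := hU (g T) T ⟨hT.1, hT.2.le⟩ (h1 T hTT)
    have him : ∀ᶠ s in 𝓝 T, c s ∈ f '' U := by
      refine (hcc.tendsto T) ?_
      rw [← h1 T hTT, ← hf.map_nhds_eq]
      exact image_mem_map hUa
    obtain ⟨ε, hε, hεU⟩ := Metric.eventually_nhds_iff.1 him
    set T' := min (T + ε / 2) y with hT'
    have hTT' : T < T' := lt_min (by linarith) hy
    have hk : ∀ s ∈ Icc T T', ∃ u ∈ U, f u = c s := fun s hs => by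
      refine hεU ?_
      have := hs.2.trans (min_le_left _ _)
      rw [Real.dist_eq, abs_of_nonneg (by linarith [hs.1])]
      linarith
    choose! k hkU hkf using hk
    let G : ℝ → X := fun s => if s ≤ T then g s else k s
    have hG1 : ∀ s, s ≤ T → G s = g s := fun s hs => if_pos hs
    have hG2 : ∀ s ∈ Icc T T', G s ∈ U ∧ f (G s) = c s := by
      intro s hs
      rcases hs.1.eq_or_lt with rfl | h
      · rw [hG1 _ le_rfl]
        exact ⟨mem_of_mem_nhds hUa, h1 _ hTT⟩
      · have : G s = k s := if_neg (not_le.mpr h)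
        rw [this]
        exact ⟨hkU s hs, hkf s hs⟩
    have hGU : ∀ s ∈ Icc T T', ∀ t ∈ Icc T T', dist (G s) (G t) ≤ L * |s - t| := by
      intro s hs t ht
      calc dist (G s) (G t) ≤ K * dist (f (G s)) (f (G t)) :=
            hUK _ (hG2 s hs).1 _ (hG2 t ht).1
        _ ≤ K * (M * |s - t|) := by
            rw [(hG2 s hs).2, (hG2 t ht).2]
            gcongr
            exact hc s t
        _ = L * |s - t| := by rw [hL, mul_assoc]
    refine ⟨T', ⟨G, ?_, fun s hs => ?_, ?_⟩, hTT', min_le_right _ _⟩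
    · rw [hG1 0 hT.1, h0]
    · rcases le_total s T with h | h
      · rw [hG1 s h, h1 s ⟨hs.1, h⟩]
      · exact (hG2 s ⟨h, hs.2⟩).2
    · have key : ∀ s ∈ Icc 0 T', ∀ t ∈ Icc 0 T', s ≤ t → dist (G s) (G t) ≤ L * |s - t| := by
        intro s hs t ht hst
        rcases le_total t T with h | h
        · rw [hG1 t h, hG1 s (hst.trans h)]
          exact h2 s ⟨hs.1, hst.trans h⟩ t ⟨ht.1, h⟩
        rcases le_total T s with h' | h'
        · exact hGU s ⟨h', hs.2⟩ t ⟨h, ht.2⟩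
        have e1 : dist (G s) (G T) ≤ L * |s - T| := by
          rw [hG1 s h', hG1 T le_rfl]
          exact h2 s ⟨hs.1, h'⟩ T hTT
        have e2 := hGU T ⟨le_rfl, hTT'.le⟩ t ⟨h, ht.2⟩
        rw [abs_of_nonpos (by linarith)] at e1 e2 ⊢
        calc dist (G s) (G t) ≤ dist (G s) (G T) + dist (G T) (G t) := dist_triangle _ _ _
          _ ≤ L * (-(s - T)) + L * (-(T - t)) := add_le_add e1 e2
          _ = L * (-(s - t)) := by ring
      intro s hs t ht
      rcases le_total s t with h | h
      · exact key s hs t ht h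
      · rw [dist_comm, abs_sub_comm]
        exact key t ht s hs h
  obtain ⟨g, h0, h1, h2⟩ := hsub (right_mem_Icc.mpr zero_le_one)
  exact ⟨g, h0, (hlip h2).continuousOn, h1⟩

/-- Local expansion: strict differentiability perturbs the lower bound `α` of the derivative by
at most `α / 2`. -/
lemma exists_nhds_dist_le {X Y : Type*} [NormedAddCommGroup X] [NormedSpace ℝ X]
    [NormedAddCommGroup Y] [NormedSpace ℝ Y] {f : X → Y} {A : X →L[ℝ] Y} {a : X}
    (hf : HasStrictFDerivAt f A a) {α : ℝ} (hα : 0 < α) (hA : ∀ v, α * ‖v‖ ≤ ‖A v‖) :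
    ∃ U ∈ 𝓝 a, ∀ u ∈ U, ∀ v ∈ U, dist u v ≤ 2 / α * dist (f u) (f v) := by
  have h := hf.isLittleO.def (half_pos hα)
  rw [nhds_prod_eq] at h
  obtain ⟨U, hU, hUU⟩ := mem_prod_self_iff.1 h
  refine ⟨U, hU, fun u hu v hv => ?_⟩
  have h1 : ‖f u - f v - A (u - v)‖ ≤ α / 2 * ‖u - v‖ := hUU (mk_mem_prod hu hv)
  have h2 := hA (u - v)
  have h3 : ‖A (u - v)‖ ≤ ‖f u - f v‖ + ‖f u - f v - A (u - v)‖ := by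
    rw [show A (u - v) = (f u - f v) - (f u - f v - A (u - v)) by abel]
    refine (norm_sub_le _ _).trans ?_
    simp
  rw [dist_eq_norm, dist_eq_norm, div_mul_eq_mul_div, le_div_iff₀ hα]
  linarith

/-- Every segment starting at `f x` lifts to a continuous path starting at `x`. The segment stays
in a ball around `f x`, over which the hypothesis gives a uniform expansion constant. -/
lemma exists_lift_segment {X Y : Type*} [NormedAddCommGroup X] [NormedSpace ℝ X] [CompleteSpace X]
    [NormedAddCommGroup Y] [NormedSpace ℝ Y] {f : X → Y} {f' : X → X ≃L[ℝ] Y}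
    (hloc : IsLocalHomeomorph f)
    (hst : ∀ x, HasStrictFDerivAt f (f' x : X →L[ℝ] Y) x)
    (hKat : ∀ y : Y, ∀ ϱ : ℝ, 0 < ϱ →
      ∃ α : ℝ, 0 < α ∧ ∀ x : X, ‖f x - y‖ < ϱ → α ≤ surBanach (f' x : X →L[ℝ] Y))
    (x : X) (y : Y) :
    ∃ g : unitInterval → X, g 0 = x ∧ Continuous g ∧
      ∀ s : unitInterval, f (g s) = f x + (s : ℝ) • (y - f x) := by
  obtain ⟨α, hα, hαs⟩ := hKat (f x) (‖y - f x‖ + 1) (by positivity)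
  have hM : ∀ s t : ℝ, dist (f x + s • (y - f x)) (f x + t • (y - f x)) ≤ ‖y - f x‖ * |s - t| := by
    intro s t
    rw [dist_add_left, dist_eq_norm, ← sub_smul, norm_smul, Real.norm_eq_abs, mul_comm]
  have hU : ∀ a, ∀ s ∈ Icc (0 : ℝ) 1, f a = f x + s • (y - f x) →
      ∃ U ∈ 𝓝 a, ∀ u ∈ U, ∀ v ∈ U, dist u v ≤ 2 / α * dist (f u) (f v) := by
    intro a s hs ha
    refine exists_nhds_dist_le (hst a) hα (le_norm_of_le_surBanach (f' a) (hαs a ?_))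
    rw [ha, add_sub_cancel_left, norm_smul, Real.norm_eq_abs, abs_of_nonneg hs.1]
    nlinarith [hs.2, norm_nonneg (y - f x)]
  obtain ⟨g, h0, h1, h2⟩ := exists_lift_curve (x := x) hloc
    (c := fun s : ℝ => f x + s • (y - f x)) (by positivity) (norm_nonneg _) hM hU (by simp)
  exact ⟨fun s => g s, by simpa using h0, h1.comp_continuous continuous_subtype_val
    (fun s => s.2), fun s => h2 s s.2⟩

/-- If `f a = f b`, contract the image of the segment `[a, b]` linearly to the point `f a` and lift
the contraction. The endpoints of the lifts form a continuous curve in the fibre of `f a`, which is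
discrete; this constant curve runs from `a` to `b`. -/
lemma injective_of_lift_segments {X Y : Type*} [NormedAddCommGroup X] [NormedSpace ℝ X]
    [NormedAddCommGroup Y] [NormedSpace ℝ Y] {f : X → Y} (hloc : IsLocalHomeomorph f)
    (hlift : ∀ x y, ∃ g : unitInterval → X, g 0 = x ∧ Continuous g ∧
      ∀ s : unitInterval, f (g s) = f x + (s : ℝ) • (y - f x)) :
    Function.Injective f := by
  intro a b hab
  choose g hg0 hgc hgf using fun x => hlift x (f a)
  have hsep := T2Space.isSeparatedMap f
  have hinj := hloc.isLocallyInjective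
  have hfc := hloc.continuous
  let γ : unitInterval → X := fun t => a + (t : ℝ) • (b - a)
  have hγ : Continuous γ := by fun_prop
  let H : C(unitInterval × unitInterval, Y) :=
    ⟨fun p => f (γ p.2) + (p.1 : ℝ) • (f a - f (γ p.2)), by fun_prop⟩
  have hcont : Continuous (fun p : unitInterval × unitInterval => g (γ p.2) p.1) :=
    hloc.continuous_lift hsep H (funext fun p => hgf _ _) (by simpa [hg0] using hγ)
      (fun t => hgc (γ t))
  -- Over the two endpoints the contracted segment is constant, and so is its lift.
  have hconst : ∀ x, f x = f a → g x 1 = x := by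
    intro x hx
    rw [← hg0 x]
    nth_rw 1 [hg0 x]
    exact hsep.const_of_comp hinj (hgc x) (fun s t => by simp [hgf, hx]) 1 0
  have hend : g (γ 0) 1 = g (γ 1) 1 :=
    hsep.const_of_comp hinj (g := fun t => g (γ t) 1)
      (hcont.comp (by fun_prop : Continuous fun t : unitInterval => ((1 : unitInterval), t)))
      (fun s t => by simp [hgf]) 0 1
  have e0 : γ 0 = a := by simp [γ]
  have e1 : γ 1 = b := by simp [γ]
  rwa [e0, e1, hconst a rfl, hconst b hab.symm] at hend

/-! ### The Clarke gradient of the squared distance to `y` -/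

/-- The two base points of the Clarke difference quotient tend to `x`. -/
lemma tendsto_base {X : Type*} [NormedAddCommGroup X] [NormedSpace ℝ X] (x v : X) :
    Tendsto (fun p : X × ℝ => x + p.1) ((𝓝 (0 : X)) ×ˢ (𝓝[>] (0 : ℝ))) (𝓝 x) ∧
      Tendsto (fun p : X × ℝ => x + p.1 + p.2 • v) ((𝓝 (0 : X)) ×ˢ (𝓝[>] (0 : ℝ))) (𝓝 x) := by
  have hle : (𝓝 (0 : X)) ×ˢ (𝓝[>] (0 : ℝ)) ≤ 𝓝 ((0 : X), (0 : ℝ)) := by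
    rw [nhds_prod_eq]
    exact prod_mono le_rfl nhdsWithin_le_nhds
  constructor
  · have h : Continuous fun p : X × ℝ => x + p.1 := by fun_prop
    simpa using (h.tendsto (0, 0)).mono_left hle
  · have h : Continuous fun p : X × ℝ => x + p.1 + p.2 • v := by fun_prop
    simpa using (h.tendsto (0, 0)).mono_left hle

/-- The difference quotients in the definition of `clarkeDeriv` are bounded, by local Lipschitz
continuity. This keeps the real-valued `limsup` from taking a junk value. -/
lemma exists_eventually_abs_quotient_le {X Y : Type*} [NormedAddCommGroup X] [NormedSpace ℝ X]
    [NormedAddCommGroup Y] [NormedSpace ℝ Y] {f : X → Y} {A : X →L[ℝ] Y} {x : X}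
    (hf : HasStrictFDerivAt f A x) (y : Y) (v : X) :
    ∃ C : ℝ, ∀ᶠ p in (𝓝 (0 : X)) ×ˢ (𝓝[>] (0 : ℝ)),
      |((1/2 : ℝ) * ‖f (x + p.1 + p.2 • v) - y‖ ^ 2 - (1/2 : ℝ) * ‖f (x + p.1) - y‖ ^ 2) / p.2|
        ≤ C := by
  obtain ⟨K, s, hs, hK⟩ := hf.exists_lipschitzOnWith
  have hb : ∀ᶠ u in 𝓝 x, ‖f u - y‖ < ‖f x - y‖ + 1 :=
    ((hf.continuousAt.sub continuousAt_const).norm).eventually_lt continuousAt_const (by simp)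
  obtain ⟨t1, t2⟩ := tendsto_base x v
  have hpos : ∀ᶠ p in (𝓝 (0 : X)) ×ˢ (𝓝[>] (0 : ℝ)), 0 < p.2 :=
    tendsto_snd.eventually self_mem_nhdsWithin
  refine ⟨K * ‖v‖ * (‖f x - y‖ + 1), ?_⟩
  filter_upwards [t1.eventually hb, t2.eventually hb, t1.eventually hs, t2.eventually hs, hpos]
    with p b1 b2 s1 s2 hp
  have h1 := hK.dist_le_mul _ s2 _ s1
  rw [dist_eq_norm, dist_eq_norm, add_sub_cancel_left, norm_smul, Real.norm_eq_abs,
    abs_of_pos hp] at h1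
  have h2 := abs_norm_sub_norm_le (f (x + p.1 + p.2 • v) - y) (f (x + p.1) - y)
  rw [sub_sub_sub_cancel_right] at h2
  rw [abs_div, abs_of_pos hp, div_le_iff₀ hp]
  set N := ‖f (x + p.1 + p.2 • v) - y‖
  set R := ‖f (x + p.1) - y‖
  have hN : 0 ≤ N := norm_nonneg _
  have hR : 0 ≤ R := norm_nonneg _
  calc |(1/2 : ℝ) * N ^ 2 - (1/2 : ℝ) * R ^ 2| = |N - R| * ((N + R) / 2) := by
        rw [show (1/2 : ℝ) * N ^ 2 - (1/2 : ℝ) * R ^ 2 = (N - R) * ((N + R) / 2) by ring, abs_mul,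
          abs_of_nonneg (a := (N + R) / 2) (by positivity)]
    _ ≤ (K * (p.2 * ‖v‖)) * (‖f x - y‖ + 1) := by
        gcongr
        · exact h2.trans h1
        · linarith
    _ = K * ‖v‖ * (‖f x - y‖ + 1) * p.2 := by ring

/-- In the Newton direction `v`, where `A v = -(f x - y)`, the functional `½‖f - y‖²` decreases at
Clarke rate at least `‖f x - y‖²`, because `f (u + t v) - y = (1 - t)(f u - y) + o(t)` uniformly as
`u → x`. -/
lemma clarkeDeriv_le_neg_sq {X Y : Type*} [NormedAddCommGroup X] [NormedSpace ℝ X]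
    [NormedAddCommGroup Y] [NormedSpace ℝ Y] {f : X → Y} {A : X →L[ℝ] Y} {x : X}
    (hf : HasStrictFDerivAt f A x) (y : Y) {v : X} (hv : A v = -(f x - y)) :
    clarkeDeriv (fun u => (1/2 : ℝ) * ‖f u - y‖ ^ 2) x v ≤ -‖f x - y‖ ^ 2 := by
  set r := ‖f x - y‖ with hr
  have hr0 : 0 ≤ r := norm_nonneg _
  obtain ⟨C, hC⟩ := exists_eventually_abs_quotient_le hf y v
  obtain ⟨t1, t2⟩ := tendsto_base x v
  have hpos : ∀ᶠ p in (𝓝 (0 : X)) ×ˢ (𝓝[>] (0 : ℝ)), 0 < p.2 :=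
    tendsto_snd.eventually self_mem_nhdsWithin
  have ht : Tendsto (fun p : X × ℝ => p.2) ((𝓝 (0 : X)) ×ˢ (𝓝[>] (0 : ℝ))) (𝓝 0) :=
    tendsto_snd.mono_right nhdsWithin_le_nhds
  have hfx : Tendsto (fun p : X × ℝ => f (x + p.1)) ((𝓝 (0 : X)) ×ˢ (𝓝[>] (0 : ℝ))) (𝓝 (f x)) :=
    hf.continuousAt.tendsto.comp t1
  have hR : Tendsto (fun p : X × ℝ => ‖f (x + p.1) - y‖)
      ((𝓝 (0 : X)) ×ˢ (𝓝[>] (0 : ℝ))) (𝓝 r) := (hfx.sub_const y).norm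
  have main : ∀ ε : ℝ, 0 < ε →
      clarkeDeriv (fun u => (1/2 : ℝ) * ‖f u - y‖ ^ 2) x v ≤ (ε - r) * r + ε := by
    intro ε hε
    refine limsup_le_of_le (IsBoundedUnder.isCoboundedUnder_le
      (isBoundedUnder_of_eventually_ge (a := -C) (hC.mono fun p hp => (abs_le.1 hp).1))) ?_
    have hc : 0 < ε / 2 / (‖v‖ + 1) := by positivity
    have hrem := (t2.prodMk_nhds t1).eventually (hf.isLittleO.def hc)
    have hclose : ∀ᶠ p : X × ℝ in (𝓝 (0 : X)) ×ˢ (𝓝[>] (0 : ℝ)), ‖f (x + p.1) - f x‖ < ε / 2 := by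
      have h := (hfx.sub_const (f x)).norm
      rw [sub_self, norm_zero] at h
      exact h.eventually_lt_const (half_pos hε)
    -- With `R = ‖f (x + h) - y‖` and `‖f (x + h + t v) - y‖ ≤ R + t (ε - R)`, the difference quotient
    -- is at most `½ (ε - R) (2 R + t (ε - R))`, whose limit is `(ε - r) r`.
    have hlim : Tendsto (fun p : X × ℝ => (1/2 : ℝ) * ((ε - ‖f (x + p.1) - y‖) *
        (2 * ‖f (x + p.1) - y‖ + p.2 * (ε - ‖f (x + p.1) - y‖))))
        ((𝓝 (0 : X)) ×ˢ (𝓝[>] (0 : ℝ))) (𝓝 ((1/2 : ℝ) * ((ε - r) * (2 * r + 0 * (ε - r))))) :=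
      ((hR.const_sub ε).mul ((hR.const_mul 2).add (ht.mul (hR.const_sub ε)))).const_mul _
    have hlim' := hlim.eventually_lt_const (u := (ε - r) * r + ε) (by nlinarith)
    filter_upwards [hrem, hclose, hlim', hpos, ht.eventually_lt_const one_pos]
      with p h1 h2 h3 hp hp1
    refine le_trans ?_ h3.le
    simp only [add_sub_cancel_left, map_smul, hv] at h1
    have h1' : ‖f (x + p.1 + p.2 • v) - f (x + p.1) - p.2 • -(f x - y)‖ ≤ p.2 * (ε / 2) := by
      refine h1.trans ?_
      rw [norm_smul, Real.norm_eq_abs, abs_of_pos hp]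
      have hv1 : ‖v‖ / (‖v‖ + 1) ≤ 1 := by
        rw [div_le_one (by positivity)]
        linarith
      calc ε / 2 / (‖v‖ + 1) * (p.2 * ‖v‖) = p.2 * (ε / 2) * (‖v‖ / (‖v‖ + 1)) := by ring
        _ ≤ p.2 * (ε / 2) * 1 := by gcongr
        _ = _ := mul_one _
    have hdec : f (x + p.1 + p.2 • v) - y = (1 - p.2) • (f (x + p.1) - y) +
        p.2 • (f (x + p.1) - f x) +
        (f (x + p.1 + p.2 • v) - f (x + p.1) - p.2 • -(f x - y)) := by
      module
    have hN : ‖f (x + p.1 + p.2 • v) - y‖ ≤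
        ‖f (x + p.1) - y‖ + p.2 * (ε - ‖f (x + p.1) - y‖) := by
      calc ‖f (x + p.1 + p.2 • v) - y‖ ≤ (1 - p.2) * ‖f (x + p.1) - y‖ +
            p.2 * ‖f (x + p.1) - f x‖ + p.2 * (ε / 2) := by
            rw [hdec]
            refine (norm_add₃_le).trans ?_
            rw [norm_smul, norm_smul, Real.norm_eq_abs, Real.norm_eq_abs, abs_of_pos hp,
              abs_of_pos (by linarith : 0 < 1 - p.2)]
            gcongr
        _ ≤ (1 - p.2) * ‖f (x + p.1) - y‖ + p.2 * (ε / 2) + p.2 * (ε / 2) := by gcongr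
        _ = _ := by ring
    rw [div_le_iff₀ hp]
    have hsq := pow_le_pow_left₀ (norm_nonneg _) hN 2
    linear_combination (1/2 : ℝ) * hsq
  refine le_of_forall_pos_le_add fun δ hδ => ?_
  refine (main (δ / (r + 1)) (by positivity)).trans (le_of_eq ?_)
  field_simp
  ring

/-- An explicit generalized gradient is `‖f x - y‖ • φ ∘ A` with `φ` norming `f x - y`. Without such
an element the infimum `lambdaF` would have the junk value `0`. -/
lemma clarkeSubdiff_nonempty {X Y : Type*} [NormedAddCommGroup X] [NormedSpace ℝ X]
    [NormedAddCommGroup Y] [NormedSpace ℝ Y] {f : X → Y} {A : X →L[ℝ] Y} {x : X}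
    (hf : HasStrictFDerivAt f A x) (y : Y) :
    (clarkeSubdiff (fun u => (1/2 : ℝ) * ‖f u - y‖ ^ 2) x).Nonempty := by
  obtain ⟨φ, hφ, hφx⟩ := exists_dual_vector'' ℝ (f x - y)
  have hφx : φ (f x - y) = ‖f x - y‖ := hφx
  set r := ‖f x - y‖ with hr
  refine ⟨r • φ.comp A, fun v => ?_⟩
  obtain ⟨C, hC⟩ := exists_eventually_abs_quotient_le hf y v
  refine le_of_forall_pos_sub_le fun δ hδ => ?_
  refine le_limsup_of_frequently_le ?_
    (isBoundedUnder_of_eventually_le (a := C) (hC.mono fun p hp => (abs_le.1 hp).2))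
  -- The increment `h = 0` already gives the lower bound: `r • φ` is a convex subgradient of
  -- `½‖·‖²` at `f x - y`.
  have hincl : Tendsto (fun t : ℝ => ((0 : X), t)) (𝓝[>] 0) ((𝓝 (0 : X)) ×ˢ (𝓝[>] (0 : ℝ))) :=
    tendsto_const_nhds.prodMk tendsto_id
  refine hincl.frequently (Eventually.frequently ?_)
  have hslope := (hf.hasFDerivAt.hasLineDerivAt v).tendsto_slope_zero_right
  have hs2 := ((φ.continuous.tendsto _).comp hslope).const_mul r
  have hev := hs2.eventually_const_lt (u := (r • φ.comp A) v - δ) (by simp [hδ])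
  filter_upwards [hev, self_mem_nhdsWithin] with t h1 ht
  refine h1.le.trans ?_
  have ht : 0 < t := ht
  simp only [Function.comp_apply, map_smul, smul_eq_mul, add_zero]
  rw [le_div_iff₀ ht]
  have h3 : φ (f (x + t • v) - y) ≤ ‖f (x + t • v) - y‖ :=
    (Real.le_norm_self _).trans ((φ.le_opNorm _).trans
      (mul_le_of_le_one_left (norm_nonneg _) hφ))
  have h4 : φ (f (x + t • v) - f x) = φ (f (x + t • v) - y) - r := by
    rw [← hφx, ← map_sub, sub_sub_sub_cancel_right]
  rw [h4]
  have hr0 : 0 ≤ r := norm_nonneg _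
  have h5 := mul_le_mul_of_nonneg_left h3 hr0
  have h6 : r * (t⁻¹ * (φ (f (x + t • v) - y) - r)) * t = r * φ (f (x + t • v) - y) - r * r := by
    field_simp
  rw [h6]
  nlinarith [sq_nonneg (‖f (x + t • v) - y‖ - r)]

/-- Test a generalized gradient `w` on the Newton direction `v`: `‖f x - y‖² ≤ -w v ≤ ‖w‖ ‖v‖`, and
`α ‖v‖ ≤ ‖f x - y‖`. -/
lemma le_lambdaF {X Y : Type*} [NormedAddCommGroup X] [NormedSpace ℝ X]
    [NormedAddCommGroup Y] [NormedSpace ℝ Y] {f : X → Y} {A : X ≃L[ℝ] Y} {x : X}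
    (hf : HasStrictFDerivAt f (A : X →L[ℝ] Y) x) (y : Y) {α : ℝ}
    (hα : α ≤ surBanach (A : X →L[ℝ] Y)) :
    α * ‖f x - y‖ ≤ lambdaF (fun u => (1/2 : ℝ) * ‖f u - y‖ ^ 2) x := by
  refine le_csInf ((clarkeSubdiff_nonempty hf y).image _) ?_
  rintro _ ⟨w, hw, rfl⟩
  dsimp only
  rcases (norm_nonneg (f x - y)).eq_or_lt with h0 | hr
  · rw [← h0, mul_zero]
    exact norm_nonneg w
  set v := A.symm (-(f x - y)) with hv
  have hAv : A v = -(f x - y) := by simp [hv]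
  have h1 : w v ≤ -‖f x - y‖ ^ 2 := (hw v).trans (clarkeDeriv_le_neg_sq hf y hAv)
  have h2 := le_norm_of_le_surBanach A hα v
  rw [hAv, norm_neg] at h2
  have h3 := (neg_le_abs (w v)).trans (w.le_opNorm v)
  have h4 : ‖f x - y‖ ^ 2 ≤ ‖w‖ * ‖v‖ := by linarith
  rcases le_or_gt α 0 with hα0 | hα0
  · exact (mul_nonpos_of_nonpos_of_nonneg hα0 hr.le).trans (norm_nonneg _)
  refine le_of_mul_le_mul_right ?_ hr
  calc α * ‖f x - y‖ * ‖f x - y‖ = α * ‖f x - y‖ ^ 2 := by ring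
    _ ≤ α * (‖w‖ * ‖v‖) := by gcongr
    _ = ‖w‖ * (α * ‖v‖) := by ring
    _ ≤ ‖w‖ * ‖f x - y‖ := by gcongr

theorem katriel_implies_chang_PS {X Y : Type*} [NormedAddCommGroup X] [NormedSpace ℝ X] [CompleteSpace X]
    [NormedAddCommGroup Y] [NormedSpace ℝ Y] [CompleteSpace Y]
    (f : X → Y) (f' : X → X ≃L[ℝ] Y)
    (hC1 : ContDiff ℝ 1 f)
    (hdf : ∀ x : X, HasFDerivAt f (f' x : X →L[ℝ] Y) x)
    (hKat : ∀ y : Y, ∀ ϱ : ℝ, 0 < ϱ →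
      ∃ α : ℝ, 0 < α ∧ ∀ x : X, ‖f x - y‖ < ϱ → α ≤ surBanach (f' x : X →L[ℝ] Y)) :
    ∀ y : Y, ∀ x : ℕ → X,
      (∃ C : ℝ, ∀ n, |(1/2 : ℝ) * ‖f (x n) - y‖ ^ 2| ≤ C) →
      Filter.Tendsto (fun n => lambdaF (fun u => (1/2 : ℝ) * ‖f u - y‖ ^ 2) (x n))
        Filter.atTop (nhds 0) →
      ∃ (z : X) (φ : ℕ → ℕ), StrictMono φ ∧
        Filter.Tendsto (fun n => x (φ n)) Filter.atTop (nhds z) := by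
  intro y x ⟨C, hC⟩ hlam
  have hst : ∀ u, HasStrictFDerivAt f (f' u : X →L[ℝ] Y) u := fun u =>
    hC1.contDiffAt.hasStrictFDerivAt' (hdf u) one_ne_zero
  have hloc : IsLocalHomeomorph f := IsLocalHomeomorph.mk f fun u =>
    ⟨(hst u).toOpenPartialHomeomorph f, (hst u).mem_toOpenPartialHomeomorph_source,
      fun _ _ => rfl⟩
  have hlift := exists_lift_segment hloc hst hKat
  have hinj := injective_of_lift_segments hloc hlift
  have hC0 : 0 ≤ C := (abs_nonneg _).trans (hC 0)
  obtain ⟨α, hα, hαs⟩ := hKat y (2 * C + 2) (by positivity)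
  have hbound : ∀ n, ‖f (x n) - y‖ < 2 * C + 2 := fun n => by
    have h := (le_abs_self _).trans (hC n)
    -- `2 ρ ≤ ρ² + 1` with `ρ² ≤ 2 C`.
    nlinarith [sq_nonneg (‖f (x n) - y‖ - 1)]
  have hfx : Tendsto (fun n => f (x n)) atTop (𝓝 y) := by
    have hdiv := hlam.div_const α
    rw [zero_div] at hdiv
    rw [tendsto_iff_norm_sub_tendsto_zero]
    refine squeeze_zero (fun _ => norm_nonneg _) (fun n => ?_) hdiv
    rw [le_div_iff₀ hα, mul_comm]
    exact le_lambdaF (hst (x n)) y (hαs _ (hbound n))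
  obtain ⟨g, -, -, hg⟩ := hlift (x 0) y
  have hz : f (g 1) = y := by simp [hg]
  refine ⟨g 1, id, strictMono_id, ?_⟩
  rw [(hloc.isOpenEmbedding_of_injective hinj).isEmbedding.tendsto_nhds_iff, hz]
  exact hfx
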